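/- arXiv:1708.03393 — 2 statements merged into one kernel-verified Lean document; each statement's English description precedes it below -/
import Mathlib

section
/- Let R be a unique factorization domain whose fraction field L has characteristic different from two, and let R ⊆ S be a module-finite extension of commutative rings such that S is generated as an R-algebra by two elements s₁, s₂ but is not generated as an R-algebra by any single element. Assume f(s₁) = 0 and g(s₂) = 0, where f(x) = x² − ax + b and g(y) = y² − cy + d for some a, b, c, d ∈ R. If gcd(2, c) = 1 (i.e., 2 and c are relatively prime in R) and a² − 4b is a nonzero square-free element of R, then R ⊆ S splits. -/
theorem aux_split {R S K : Type} [CommRing R] [CommRing S] [Algebra R S] [Field K] [Algebra R K]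
    (φ : S →ₐ[R] K) (s₁ s₂ : S) (hgen : Algebra.adjoin R {s₁, s₂} = ⊤)
    {n : ℕ} (v : Fin (n + 1) → K) (hv : LinearIndependent R v) (h0 : v 0 = 1)
    (hx : ∀ i, φ s₁ * v i ∈ Submodule.span R (Set.range v))
    (hy : ∀ i, φ s₂ * v i ∈ Submodule.span R (Set.range v)) :
    ∃ ρ : S →ₗ[R] R, ρ 1 = 1 := by
  have key : ∀ t : K, (∀ i, t * v i ∈ Submodule.span R (Set.range v)) →
      ∀ m ∈ Submodule.span R (Set.range v), t * m ∈ Submodule.span R (Set.range v) := by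
    intro t ht m hm
    induction hm using Submodule.span_induction with
    | mem z hz => obtain ⟨i, rfl⟩ := hz; exact ht i
    | zero => simp
    | add z w _ _ hz hw => rw [mul_add]; exact add_mem hz hw
    | smul r z _ hz => rw [mul_smul_comm]; exact Submodule.smul_mem _ _ hz
  have h1 : (1 : K) ∈ Submodule.span R (Set.range v) :=
    Submodule.subset_span ⟨0, h0⟩
  have all : ∀ s : S, ∀ m ∈ Submodule.span R (Set.range v),
      φ s * m ∈ Submodule.span R (Set.range v) := by
    intro s
    have hs : s ∈ Algebra.adjoin R {s₁, s₂} := by rw [hgen]; trivial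
    induction hs using Algebra.adjoin_induction with
    | mem z hz =>
      rcases hz with rfl | rfl
      · exact key _ hx
      · exact key _ hy
    | algebraMap r =>
      intro m hm
      rw [AlgHom.commutes, ← Algebra.smul_def]
      exact Submodule.smul_mem _ _ hm
    | add z w _ _ hz hw =>
      intro m hm; rw [map_add, add_mul]; exact add_mem (hz m hm) (hw m hm)
    | mul z w _ _ hz hw =>
      intro m hm; rw [map_mul, mul_assoc]; exact hz _ (hw m hm)
  have mem : ∀ s : S, φ.toLinearMap s ∈ Submodule.span R (Set.range v) := by
    intro s; simpa using all s 1 h1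
  refine ⟨(Finsupp.lapply 0 ∘ₗ hv.repr) ∘ₗ φ.toLinearMap.codRestrict _ mem, ?_⟩
  have : hv.repr (φ.toLinearMap.codRestrict _ mem 1) = Finsupp.single 0 1 := by
    apply hv.repr_eq_single
    simp [h0]
  simp only [LinearMap.comp_apply, this]
  simp

theorem aux_dvd {R : Type} [CommRing R] [IsDomain R] [UniqueFactorizationMonoid R]
    (D : R) (hne : D ≠ 0) (hsq : ∀ p : R, Prime p → ¬ p ^ 2 ∣ D) (p q : R) (hq : q ≠ 0)
    (h : q ^ 2 ∣ p ^ 2 * D) : q ∣ p := by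
  obtain ⟨q', p', c', hrel, rfl, rfl⟩ := UniqueFactorizationMonoid.exists_reduced_factors q hq p
  have hc : c' ≠ 0 := left_ne_zero_of_mul hq
  have hq' : q' ≠ 0 := right_ne_zero_of_mul hq
  have h2 : q' ^ 2 ∣ p' ^ 2 * D := by
    rw [mul_pow, mul_pow, mul_assoc] at h
    exact (mul_dvd_mul_iff_left (pow_ne_zero 2 hc)).1 h
  have h3 : q' ^ 2 ∣ D := (hrel.pow (m := 2) (n := 2)).dvd_of_dvd_mul_left h2
  have hu : IsUnit q' := by
    by_contra hu
    obtain ⟨r, hr, hrq⟩ := WfDvdMonoid.exists_irreducible_factor hu hq'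
    exact hsq r hr.prime ((pow_dvd_pow_of_dvd hrq 2).trans h3)
  exact mul_dvd_mul_left _ hu.dvd

theorem aux_int {R K : Type} [CommRing R] [IsDomain R] [UniqueFactorizationMonoid R]
    [Field K] [Algebra R K] (hK : Function.Injective (algebraMap R K))
    (z : K) (hz : IsIntegral R z) (p q : R) (hq : q ≠ 0)
    (h : algebraMap R K q * z = algebraMap R K p) : ∃ r, algebraMap R K r = z := by
  let g : FractionRing R →ₐ[R] K := IsFractionRing.liftAlgHom (g := Algebra.ofId R K) hK
  have hqK : algebraMap R K q ≠ 0 := by simpa using hK.ne hq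
  have hz' : g (algebraMap R _ p / algebraMap R _ q) = z := by
    rw [map_div₀, AlgHom.commutes, AlgHom.commutes, ← h]; field_simp
  have hi : IsIntegral R (algebraMap R (FractionRing R) p / algebraMap R _ q) := by
    rw [← isIntegral_algHom_iff g g.toRingHom.injective, hz']; exact hz
  obtain ⟨r, hr⟩ := IsIntegrallyClosed.isIntegral_iff.1 hi
  exact ⟨r, by rw [← hz', ← hr, AlgHom.commutes]⟩

theorem aux_field {R S K : Type} [CommRing R] [IsDomain R] [UniqueFactorizationMonoid R]
    [CommRing S] [Algebra R S] [Field K] [Algebra R K]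
    (hK : Function.Injective (algebraMap R K)) (φ : S →ₐ[R] K) (h2 : (2 : R) ≠ 0)
    (s₁ s₂ : S) (hgen : Algebra.adjoin R {s₁, s₂} = ⊤)
    (hint : ∀ s, IsIntegral R (φ s))
    (a b c d : R)
    (h₁ : s₁ ^ 2 - algebraMap R S a * s₁ + algebraMap R S b = 0)
    (h₂ : s₂ ^ 2 - algebraMap R S c * s₂ + algebraMap R S d = 0)
    (hne : a ^ 2 - 4 * b ≠ 0)
    (hsqfree : ∀ p : R, Prime p → ¬ p ^ 2 ∣ (a ^ 2 - 4 * b)) :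
    ∃ ρ : S →ₗ[R] R, ρ 1 = 1 := by
  have hx := congrArg φ h₁
  have hy := congrArg φ h₂
  have ix := hint s₁
  have iy := hint s₂
  simp only [map_add, map_sub, map_mul, map_pow, AlgHom.commutes, map_zero] at hx hy
  have split := fun n => aux_split φ s₁ s₂ hgen (n := n)
  generalize φ s₁ = x at *
  generalize φ s₂ = y at *
  set A := algebraMap R K with hA
  have A0 : ∀ r, A r = 0 → r = 0 := fun r hr => hK (by rw [hr, map_zero])
  -- the pair `1, z` is independent when `z` is integral and not in `R`
  have ind : ∀ z : K, IsIntegral R z → (¬ ∃ r, A r = z) → ∀ p q : R, A p + A q * z = 0 →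
      p = 0 ∧ q = 0 := by
    intro z hz hn p q h
    have hq : q = 0 := by
      by_contra hq
      exact hn (aux_int hK z hz (-p) q hq (by rw [map_neg]; linear_combination h))
    subst hq
    exact ⟨A0 p (by simpa using h), rfl⟩
  have li2 : ∀ z : K, IsIntegral R z → (¬ ∃ r, A r = z) → LinearIndependent R ![1, z] := by
    intro z hz hn
    rw [LinearIndependent.pair_iff]
    intro p q h
    exact ind z hz hn p q (by simpa [Algebra.smul_def] using h)
  have mem2 : ∀ z w : K, (∃ p q, w = A p + A q * z) →
      w ∈ Submodule.span R (Set.range ![1, z]) := by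
    rintro z w ⟨p, q, rfl⟩
    rw [Submodule.mem_span_range_iff_exists_fun]
    exact ⟨![p, q], by simp [Fin.sum_univ_two, Algebra.smul_def, hA]⟩
  by_cases hxR : ∃ r, A r = x
  · obtain ⟨r, rfl⟩ := hxR
    by_cases hyR : ∃ r, A r = y
    · obtain ⟨t, rfl⟩ := hyR
      refine split 0 ![1] ?_ rfl ?_ ?_
      · rw [Fintype.linearIndependent_iff]
        intro g hg i
        fin_cases i
        exact A0 _ (by simpa [Algebra.smul_def] using hg)
      · intro i
        rw [← Algebra.smul_def]
        exact Submodule.smul_mem _ _ (Submodule.subset_span ⟨i, rfl⟩)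
      · intro i
        rw [← Algebra.smul_def]
        exact Submodule.smul_mem _ _ (Submodule.subset_span ⟨i, rfl⟩)
    · refine split 1 ![1, y] (li2 y iy hyR) rfl ?_ ?_
      · intro i
        rw [← Algebra.smul_def]
        exact Submodule.smul_mem _ _ (Submodule.subset_span ⟨i, rfl⟩)
      · intro i
        apply mem2
        fin_cases i
        · exact ⟨0, 1, by simp⟩
        · exact ⟨-d, c, by simp; linear_combination hy⟩
  by_cases hq : ∃ q p₁ p₂ : R, q ≠ 0 ∧ A q * y = A p₁ + A p₂ * x
  · obtain ⟨q, p₁, p₂, hq, h⟩ := hq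
    have hdvd : q ∣ p₂ := by
      have e : A (q ^ 2 * (c ^ 2 - 4 * d) - (2 * p₁ - q * c + p₂ * a) ^ 2
            - p₂ ^ 2 * (a ^ 2 - 4 * b) + 2 * (2 * p₁ - q * c + p₂ * a) * p₂ * a)
          + A (- (4 * (2 * p₁ - q * c + p₂ * a) * p₂)) * x = 0 := by
        simp only [map_add, map_sub, map_mul, map_pow, map_neg, map_ofNat]
        have h4 : (2 * (A q * y) - A q * A c) ^ 2 =
          (2 * (A p₁ + A p₂ * x) - A q * A c) ^ 2 := by rw [h]
        linear_combination h4 - 4 * (A q) ^ 2 * hy + 4 * (A p₂) ^ 2 * hx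
      obtain ⟨e1, e2⟩ := ind x ix hxR _ _ e
      have h4 : (4 : R) ≠ 0 := by
        have : (4 : R) = 2 * 2 := by norm_num
        rw [this]; exact mul_ne_zero h2 h2
      rcases mul_eq_zero.1 (neg_eq_zero.1 e2) with h5 | h5
      · have h6 := (mul_eq_zero.1 h5).resolve_left h4
        refine aux_dvd _ hne hsqfree p₂ q hq ⟨c ^ 2 - 4 * d, ?_⟩
        rw [h6] at e1
        linear_combination -e1
      · rw [h5]; exact dvd_zero _
    obtain ⟨v, rfl⟩ := hdvd
    obtain ⟨u, hu⟩ := aux_int hK (y - A v * x) (iy.sub (isIntegral_algebraMap.mul ix)) p₁ q hq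
      (by rw [map_mul] at h; linear_combination h)
    have hy' : y = A u + A v * x := by linear_combination -hu
    refine split 1 ![1, x] (li2 x ix hxR) rfl ?_ ?_
    · intro i
      apply mem2
      fin_cases i
      · exact ⟨0, 1, by simp⟩
      · exact ⟨-b, a, by simp; linear_combination hx⟩
    · intro i
      apply mem2
      fin_cases i
      · exact ⟨u, v, by simp [hy']⟩
      · exact ⟨-(v * b), u + v * a, by simp [hy']; linear_combination A v * hx⟩
  · have mem4 : ∀ w : K, (∃ p q r s, w = A p + A q * x + A r * y + A s * (x * y)) →
        w ∈ Submodule.span R (Set.range ![1, x, y, x * y]) := by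
      rintro w ⟨p, q, r, s, rfl⟩
      rw [Submodule.mem_span_range_iff_exists_fun]
      exact ⟨![p, q, r, s], by simp [Fin.sum_univ_four, Algebra.smul_def, hA]⟩
    refine split 3 ![1, x, y, x * y] ?_ rfl ?_ ?_
    · rw [Fintype.linearIndependent_iff]
      intro g hg
      have hg' : A (g 0) + A (g 1) * x + A (g 2) * y + A (g 3) * (x * y) = 0 := by
        simpa [Fin.sum_univ_four, Algebra.smul_def, hA] using hg
      have h23 : g 2 = 0 ∧ g 3 = 0 := by
        have eN : A (g 2 ^ 2 + g 2 * g 3 * a + g 3 ^ 2 * b) =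
            (A (g 2) + A (g 3) * x) * (A (g 2 + g 3 * a) + A (- g 3) * x) := by
          simp only [map_add, map_mul, map_pow, map_neg]
          linear_combination (A (g 3)) ^ 2 * hx
        by_cases hN : g 2 ^ 2 + g 2 * g 3 * a + g 3 ^ 2 * b = 0
        · rw [hN, map_zero] at eN
          rcases mul_eq_zero.1 eN.symm with h | h
          · exact ind x ix hxR _ _ h
          · obtain ⟨h5, h6⟩ := ind x ix hxR _ _ h
            have h7 := neg_eq_zero.1 h6
            rw [h7] at h5
            exact ⟨by simpa using h5, h7⟩
        · exfalso
          refine hq ⟨_, -(g 0 * (g 2 + g 3 * a)) - g 1 * g 3 * b, 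
            g 0 * g 3 - g 1 * (g 2 + g 3 * a) + g 1 * g 3 * a, hN, ?_⟩
          rw [eN]
          simp only [map_add, map_sub, map_mul, map_neg]
          linear_combination (A (g 2) + A (g 3) * A a - A (g 3) * x) * hg' + A (g 1) * A (g 3) * hx
      rw [h23.1, h23.2] at hg'
      obtain ⟨h0, h1⟩ := ind x ix hxR (g 0) (g 1) (by simpa using hg')
      intro i
      fin_cases i
      exacts [h0, h1, h23.1, h23.2]
    · intro i
      apply mem4
      fin_cases i
      · exact ⟨0, 1, 0, 0, by simp⟩
      · exact ⟨-b, a, 0, 0, by simp; linear_combination hx⟩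
      · exact ⟨0, 0, 0, 1, by simp⟩
      · exact ⟨0, 0, -b, a, by simp; linear_combination y * hx⟩
    · intro i
      apply mem4
      fin_cases i
      · exact ⟨0, 0, 1, 0, by simp⟩
      · exact ⟨0, 0, 0, 1, by simp [mul_comm]⟩
      · exact ⟨-d, 0, c, 0, by simp; linear_combination hy⟩
      · exact ⟨0, -d, 0, c, by simp; linear_combination x * hy⟩

/-- **DSC for some nonradical quadratic extensions.**  Let `R` be a UFD whose
fraction field has characteristic `≠ 2`, and let `R ⊆ S` be a module-finite
extension such that `S` is minimally generated as an `R`-algebra by two elements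
`s₁, s₂` with `s₁² − a·s₁ + b = 0` and `s₂² − c·s₂ + d = 0` for some
`a, b, c, d ∈ R`.  If `gcd(2, c) = 1` and `a² − 4b` is a nonzero square-free
element of `R`, then `R ⊆ S` splits. -/
theorem stmt7 (R S : Type) [CommRing R] [IsDomain R] [UniqueFactorizationMonoid R]
    [CommRing S] [Algebra R S] (hinj : Function.Injective (algebraMap R S))
    [Module.Finite R S]
    (hchar : ringChar (FractionRing R) ≠ 2)
    (s₁ s₂ : S) (hgen : Algebra.adjoin R {s₁, s₂} = ⊤)
    (hmin : ∀ s : S, Algebra.adjoin R {s} ≠ ⊤)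
    (a b c d : R)
    (h₁ : s₁ ^ 2 - algebraMap R S a * s₁ + algebraMap R S b = 0)
    (h₂ : s₂ ^ 2 - algebraMap R S c * s₂ + algebraMap R S d = 0)
    (hgcd : IsRelPrime (2 : R) c)
    (hne : a ^ 2 - 4 * b ≠ 0)
    (hsqfree : ∀ p : R, Prime p → ¬ p ^ 2 ∣ (a ^ 2 - 4 * b)) :
    ∃ ρ : S →ₗ[R] R, ρ 1 = 1 := by
  have h2 : (2 : R) ≠ 0 := by
    intro h
    apply Ring.two_ne_zero hchar
    have := congrArg (algebraMap R (FractionRing R)) h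
    rwa [map_ofNat, map_zero] at this
  have : Algebra.IsIntegral R S := inferInstance
  obtain ⟨P, -, hP, hPR⟩ := Ideal.exists_ideal_over_prime_of_isIntegral
    (⊥ : Ideal R) (⊥ : Ideal S) (by
      intro r hr
      have h3 : algebraMap R S r = 0 := hr
      exact hinj (by rw [h3, map_zero]))
  let φ : S →ₐ[R] FractionRing (S ⧸ P) :=
    (IsScalarTower.toAlgHom R (S ⧸ P) (FractionRing (S ⧸ P))).comp (Ideal.Quotient.mkₐ R P)
  have hK : Function.Injective (algebraMap R (FractionRing (S ⧸ P))) := by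
    rw [injective_iff_map_eq_zero]
    intro r hr
    rw [IsScalarTower.algebraMap_apply R (S ⧸ P), IsFractionRing.to_map_eq_zero_iff] at hr
    have h3 : algebraMap R S r ∈ P := Ideal.Quotient.eq_zero_iff_mem.1 hr
    have h4 : r ∈ P.comap (algebraMap R S) := h3
    rw [hPR] at h4
    simpa using h4
  exact aux_field hK φ h2 s₁ s₂ hgen (fun s => (Algebra.IsIntegral.isIntegral s).map φ)
    a b c d h₁ h₂ hne hsqfree
end

section
/- Let R be a commutative noetherian ring containing a field of characteristic zero, and let R ⊆ S be a module-finite extension of commutative rings such that S, regarded as an R-module, has finite projective dimension (i.e., S admits a finite resolution by projective R-modules). Then there exists a retraction ρ : S → R, i.e., an R-module homomorphism with ρ(1) = 1. -/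
/-- `S` has finite projective dimension as an `R`-module: there is an exact sequence
`0 → P_n → ⋯ → P_0 → S → 0` with each `P_i` projective, i.e. a projective resolution
whose terms vanish in degrees `> n`. -/
def HasFiniteProjectiveDimension (R M : Type) [CommRing R] [AddCommGroup M]
    [Module R M] : Prop :=
  ∃ (n : ℕ) (P : CategoryTheory.ProjectiveResolution (ModuleCat.of R M)),
    ∀ i : ℕ, n < i → CategoryTheory.Limits.IsZero (P.complex.X i)

open CategoryTheory in
lemma koh_hasProjectiveDimensionLE {R M : Type} [CommRing R] [AddCommGroup M] [Module R M]
    (h : HasFiniteProjectiveDimension R M) :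
    ∃ n : ℕ, HasProjectiveDimensionLE (ModuleCat.of R M) n := by
  obtain ⟨n, P, hP⟩ := h
  refine ⟨n, ?_⟩
  let := HasExt.standard (ModuleCat.{0} R)
  refine HasProjectiveDimensionLT.mk fun i hi Y e => ?_
  obtain ⟨f, hf, rfl⟩ := P.extMk_surjective e (i + 1) rfl
  obtain rfl : f = 0 := (hP i (by omega)).eq_of_src _ _
  simp

/-- A linear functional on a quotient given by a relation. -/
lemma koh_descend {R A B : Type} [CommRing R] [AddCommGroup A] [Module R A]
    [AddCommGroup B] [Module R B] (E : Submodule R (A × B)) (b : A →ₗ[R] R)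
    (hsurj : ∀ y : B, ∃ x : A, (x, y) ∈ E) (hb : ∀ x : A, (x, (0 : B)) ∈ E → b x = 0) :
    ∃ T : B →ₗ[R] R, ∀ x y, (x, y) ∈ E → T y = b x := by
  choose g hg using hsurj
  have key : ∀ x x' y, (x, y) ∈ E → (x', y) ∈ E → b x = b x' := by
    intro x x' y h h'
    have := hb (x - x') (by simpa using E.sub_mem h h')
    rwa [map_sub, sub_eq_zero] at this
  refine ⟨⟨⟨fun y => b (g y), fun y y' => ?_⟩, fun r y => ?_⟩, fun x y h => ?_⟩
  · rw [← map_add]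
    exact key _ _ (y + y') (hg _) (by simpa using E.add_mem (hg y) (hg y'))
  · simp only [RingHom.id_apply]
    rw [← map_smul]
    exact key _ _ (r • y) (hg _) (by simpa using E.smul_mem r (hg y))
  · exact key _ _ y (hg _) h

/-- `T` behaves like a trace with respect to endomorphisms factoring through free modules. -/
def KohTrace (R M : Type) [CommRing R] [AddCommGroup M] [Module R M]
    (T : (M →ₗ[R] M) →ₗ[R] R) : Prop :=
  ∀ (k : ℕ) (i : M →ₗ[R] (Fin k → R)) (f : (Fin k → R) →ₗ[R] M),
    T (f ∘ₗ i) = LinearMap.trace R (Fin k → R) (i ∘ₗ f)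

lemma koh_factor {R A B C : Type} [CommRing R] [AddCommGroup A] [Module R A]
    [AddCommGroup B] [Module R B] [AddCommGroup C] [Module R C] (i : B →ₗ[R] C)
    (hi : Function.Injective i) (f : A →ₗ[R] C) (h : ∀ x, ∃ y, i y = f x) :
    ∃ g : A →ₗ[R] B, i ∘ₗ g = f := by
  choose g hg using h
  refine ⟨⟨⟨g, fun x y => hi ?_⟩, fun r x => hi ?_⟩, ?_⟩
  · simp [hg]
  · simp [hg]
  · ext x; exact hg x

lemma koh_trace_step {R M N : Type} [CommRing R] [AddCommGroup N] [Module R N] [AddCommGroup M] [Module R M]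
    (k : ℕ) (π : (Fin k → R) →ₗ[R] M) (hπ : Function.Surjective π)
    (ι : N →ₗ[R] (Fin k → R)) (hιinj : Function.Injective ι) (hex : Function.Exact ι π)
    (T : (N →ₗ[R] N) →ₗ[R] R) (hT : KohTrace R (N) T) :
    ∃ T' : (M →ₗ[R] M) →ₗ[R] R, KohTrace R M T' ∧
      T' LinearMap.id = (k : R) - T LinearMap.id := by
  have hι : π ∘ₗ ι = 0 := hex.linearMap_comp_eq_zero
  let E : Submodule R ((((Fin k → R) →ₗ[R] (Fin k → R)) ×
      (N →ₗ[R] N)) × (M →ₗ[R] M)) :=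
    { carrier := {z | π ∘ₗ z.1.1 = z.2 ∘ₗ π ∧ z.1.1 ∘ₗ ι = ι ∘ₗ z.1.2}
      add_mem' := by
        rintro a b ⟨h1, h2⟩ ⟨h3, h4⟩
        simp only [Set.mem_ofPred_eq, Prod.fst_add, Prod.snd_add, LinearMap.comp_add,
          LinearMap.add_comp] at *
        rw [h1, h2, h3, h4]
        exact ⟨rfl, rfl⟩
      zero_mem' := by simp
      smul_mem' := by
        rintro r a ⟨h1, h2⟩
        simp only [Set.mem_ofPred_eq, Prod.smul_fst, Prod.smul_snd, LinearMap.comp_smul,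
          LinearMap.smul_comp] at *
        rw [h1, h2]
        exact ⟨rfl, rfl⟩ }
  let b := (LinearMap.trace R (Fin k → R)) ∘ₗ LinearMap.fst R ((Fin k → R) →ₗ[R] (Fin k → R))
      (N →ₗ[R] N) - T ∘ₗ LinearMap.snd R _ _
  have hE : ∀ a κ φ, ((a, κ), φ) ∈ E ↔ (π ∘ₗ a = φ ∘ₗ π ∧ a ∘ₗ ι = ι ∘ₗ κ) :=
    fun _ _ _ => Iff.rfl
  have hs : ∀ φ, ∃ x, (x, φ) ∈ E := by
    intro φ
    obtain ⟨ψ, hψ⟩ := Module.projective_lifting_property π (φ ∘ₗ π) hπ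
    have hk : ∀ x : N, ∃ y : N, ι y = ψ (ι x) := by
      intro x
      have h1 := LinearMap.congr_fun hψ (ι x)
      have h2 : π (ι x) = 0 := LinearMap.congr_fun hι x
      simp only [LinearMap.comp_apply, h2, map_zero] at h1
      exact (hex _).1 h1
    obtain ⟨κ, hκ⟩ := koh_factor ι hιinj (ψ ∘ₗ ι) hk
    exact ⟨(ψ, κ), (hE _ _ _).2 ⟨hψ, hκ.symm⟩⟩
  have hb : ∀ x, (x, (0 : M →ₗ[R] M)) ∈ E → b x = 0 := by
    rintro ⟨ψ, κ⟩ h12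
    obtain ⟨h1, h2⟩ := (hE _ _ _).1 h12
    simp only [LinearMap.zero_comp] at h1 h2
    obtain ⟨θ, hθ⟩ := koh_factor ι hιinj ψ (fun x => (hex _).1 (LinearMap.congr_fun h1 x))
    have e1 : ψ = ι ∘ₗ θ := hθ.symm
    have e2 : κ = θ ∘ₗ ι := by
      ext1 x
      apply hιinj
      have h3 := (LinearMap.congr_fun h2 x).symm
      rw [e1] at h3
      exact h3
    have := hT k ι θ
    simp only [b, LinearMap.sub_apply, LinearMap.comp_apply, LinearMap.fst_apply,
      LinearMap.snd_apply]
    rw [e2, this, ← e1, sub_self]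
  obtain ⟨T', hT'⟩ := koh_descend E b hs hb
  refine ⟨T', ?_, ?_⟩
  · intro l i f
    obtain ⟨f', hf'⟩ := Module.projective_lifting_property π f hπ
    rw [hT' (f' ∘ₗ i ∘ₗ π, 0) (f ∘ₗ i) ⟨by
      rw [← hf']; rfl, by
      simp only [LinearMap.comp_assoc, hι, LinearMap.comp_zero]⟩]
    simp only [b, LinearMap.sub_apply, LinearMap.comp_apply, LinearMap.fst_apply,
      LinearMap.snd_apply, map_zero, sub_zero]
    rw [LinearMap.trace_comp_comm', ← hf', LinearMap.comp_assoc]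
  · rw [hT' (LinearMap.id, LinearMap.id) LinearMap.id ⟨rfl, rfl⟩]
    nontriviality R
    simp [b]

lemma koh_trace_base {R M : Type} [CommRing R] [AddCommGroup M] [Module R M]
    [Module.Finite R M] [Module.Projective R M] :
    ∃ T : (M →ₗ[R] M) →ₗ[R] R, KohTrace R M T ∧
      ∀ (m : Ideal R) [hm : m.IsPrime], algebraMap R m.ResidueField (T LinearMap.id) =
        (Module.rankAtStalk M ⟨m, hm⟩ : m.ResidueField) := by
  obtain ⟨n, p, i, -, -, hpi⟩ := Module.Finite.exists_comp_eq_id_of_projective R M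
  let T : (M →ₗ[R] M) →ₗ[R] R :=
    { toFun := fun φ => LinearMap.trace R (Fin n → R) (i ∘ₗ φ ∘ₗ p)
      map_add' := fun a b => by simp [LinearMap.add_comp, LinearMap.comp_add]
      map_smul' := fun a b => by simp [LinearMap.smul_comp, LinearMap.comp_smul] }
  refine ⟨T, ?_, ?_⟩
  · intro k j f
    change LinearMap.trace R (Fin n → R) (i ∘ₗ (f ∘ₗ j) ∘ₗ p) = _
    have e : i ∘ₗ (f ∘ₗ j) ∘ₗ p = (i ∘ₗ f) ∘ₗ (j ∘ₗ p) := rfl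
    rw [e, LinearMap.trace_comp_comm']
    have e : (j ∘ₗ p) ∘ₗ (i ∘ₗ f) = j ∘ₗ (p ∘ₗ i) ∘ₗ f := rfl
    rw [e, hpi]
    rfl
  · intro m hm
    change algebraMap R m.ResidueField (LinearMap.trace R (Fin n → R) (i ∘ₗ p)) = _
    rw [← LinearMap.trace_baseChange, LinearMap.baseChange_comp, LinearMap.trace_comp_comm',
      ← LinearMap.baseChange_comp, hpi, LinearMap.baseChange_id, LinearMap.trace_id,
      ← Ideal.finrank_fiber_eq_rankAtStalk]

lemma koh_artinian {R : Type} [CommRing R] [IsNoetherianRing R] (p : Ideal R) [p.IsPrime]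
    (hp : p ∈ minimalPrimes R) : IsArtinianRing (Localization.AtPrime p) := by
  have := IsLocalization.subsingleton_primeSpectrum_of_mem_minimalPrimes (R := R) p hp
    (Localization.AtPrime p)
  rw [isArtinianRing_iff_isNoetherianRing_krullDimLE_zero]
  refine ⟨IsLocalization.isNoetherianRing p.primeCompl _ inferInstance, ?_⟩
  infer_instance

/-- Length of the localization at `p`, as a natural number. -/
noncomputable def kohLen {R : Type} (M : Type) [CommRing R] [AddCommGroup M] [Module R M]
    (p : Ideal R) [p.IsPrime] : ℕ :=
  (Module.length (Localization.AtPrime p) (LocalizedModule p.primeCompl M)).toNat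

lemma koh_len_exact {R M N : Type} [CommRing R] [AddCommGroup N] [Module R N] [IsNoetherianRing R] [AddCommGroup M] [Module R M]
    [Module.Finite R M] [Module.Finite R N]
    (p : Ideal R) [p.IsPrime] (hp : p ∈ minimalPrimes R)
    (k : ℕ) (π : (Fin k → R) →ₗ[R] M) (hπ : Function.Surjective π)
    (ι : N →ₗ[R] (Fin k → R)) (hιinj : Function.Injective ι) (hex : Function.Exact ι π) :
    kohLen (Fin k → R) p = kohLen N p + kohLen M p := by
  have := koh_artinian p hp
  unfold kohLen
  let f : LocalizedModule p.primeCompl N →ₗ[Localization.AtPrime p]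
      LocalizedModule p.primeCompl (Fin k → R) :=
    LocalizedModule.map p.primeCompl ι
  let g : LocalizedModule p.primeCompl (Fin k → R) →ₗ[Localization.AtPrime p]
      LocalizedModule p.primeCompl M := LocalizedModule.map p.primeCompl π
  have hf : Function.Injective f :=
    LocalizedModule.map_injective p.primeCompl _ hιinj
  have hg : Function.Surjective g := LocalizedModule.map_surjective p.primeCompl _ hπ
  have hfg : Function.Exact f g :=
    LocalizedModule.map_exact p.primeCompl _ _ hex
  rw [Module.length_eq_add_of_exact f g hf hg hfg]
  rw [ENat.toNat_add Module.length_ne_top Module.length_ne_top]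

lemma koh_len_proj {R M : Type} [CommRing R] [AddCommGroup M] [Module R M]
    [Module.Finite R M] [Module.Projective R M] (p : Ideal R) [hp : p.IsPrime] :
    kohLen M p = Module.rankAtStalk M ⟨p, hp⟩ *
      (Module.length (Localization.AtPrime p) (Localization.AtPrime p)).toNat := by
  unfold kohLen Module.rankAtStalk
  have : Module.Free (Localization.AtPrime p) (LocalizedModule p.primeCompl M) :=
    Module.free_of_flat_of_isLocalRing
  rw [Module.length_of_free_of_finite, ENat.toNat_mul]
  simp

open CategoryTheory in
lemma koh_main {R : Type} [CommRing R] [IsNoetherianRing R] (n : ℕ) :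
    ∀ (M : Type) [AddCommGroup M] [Module R M] [Module.Finite R M],
    HasProjectiveDimensionLE (ModuleCat.of R M) n →
    ∃ T : (M →ₗ[R] M) →ₗ[R] R, KohTrace R M T ∧
      ∀ (m p : Ideal R) [hm : m.IsPrime] [hp : p.IsPrime], p ≤ m → p ∈ minimalPrimes R →
      ∃ c : ℤ, algebraMap R m.ResidueField (T LinearMap.id) = (c : m.ResidueField) ∧
        (kohLen M p : ℤ) = c *
          (Module.length (Localization.AtPrime p) (Localization.AtPrime p)).toNat := by
  induction n with
  | zero =>
    intro M _ _ _ h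
    have : Projective (ModuleCat.of R M) := (projective_iff_hasProjectiveDimensionLE_zero _).2 h
    have : Module.Projective R M := (IsProjective.iff_projective M).2 this
    obtain ⟨T, hT, hr⟩ := koh_trace_base (R := R) (M := M)
    refine ⟨T, hT, fun m p hm hp hle hmin => ⟨Module.rankAtStalk M ⟨m, hm⟩, ?_, ?_⟩⟩
    · rw [hr]; simp
    · rw [koh_len_proj, Module.rankAtStalk_eq_of_le_of_finite_of_flat' M hle]; push_cast; rfl
  | succ n ih =>
    intro M _ _ _ h
    obtain ⟨k, π, hπ⟩ := Module.Finite.exists_fin' R M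
    have hS := LinearMap.shortExact_shortComplexKer hπ
    have hK : HasProjectiveDimensionLE (ModuleCat.of R (LinearMap.ker π)) n :=
      (hS.hasProjectiveDimensionLT_X₃_iff n
        ((IsProjective.iff_projective (Fin k → R)).1 inferInstance)).1 h
    obtain ⟨T, hT, hc⟩ := ih _ hK
    obtain ⟨T', hT', hid⟩ := koh_trace_step k π hπ (LinearMap.ker π).subtype
      Subtype.val_injective (LinearMap.exact_subtype_ker_map π) T hT
    refine ⟨T', hT', fun m p hm hp hle hmin => ?_⟩
    obtain ⟨c, h1, h2⟩ := hc m p hle hmin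
    refine ⟨k - c, ?_, ?_⟩
    · rw [hid, map_sub, h1]; simp
    · have h3 := koh_len_exact p hmin k π hπ (LinearMap.ker π).subtype
        Subtype.val_injective (LinearMap.exact_subtype_ker_map π)
      have : Nontrivial R := ⟨0, 1, fun h => hp.ne_top ((Ideal.eq_top_iff_one _).2 (h ▸ p.zero_mem))⟩
      rw [koh_len_proj, Module.rankAtStalk_eq_finrank_of_free] at h3
      simp only [Module.finrank_fin_fun, Pi.natCast_apply, Nat.cast_id] at h3
      zify at h3
      linarith

/-- **Koh's conjecture in characteristic zero.**  Let `R` be a noetherian ring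
containing a field of characteristic zero, and `R ⊆ S` a module-finite extension such
that `S` has finite projective dimension as an `R`-module.  Then there is a
retraction `ρ : S → R`, i.e. an `R`-linear map with `ρ(1) = 1`. -/
theorem stmt13 (K R S : Type) [Field K] [CharZero K]
    [CommRing R] [IsNoetherianRing R] [Algebra K R]
    (hKinj : Function.Injective (algebraMap K R))
    [CommRing S] [Algebra R S] (hinj : Function.Injective (algebraMap R S))
    [Module.Finite R S]
    (hpd : HasFiniteProjectiveDimension R S) :
    ∃ ρ : S →ₗ[R] R, ρ 1 = 1 := by
  obtain ⟨n, hn⟩ := koh_hasProjectiveDimensionLE hpd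
  obtain ⟨T, -, hT⟩ := koh_main n S hn
  have hunit : IsUnit (T LinearMap.id) := by
    by_contra hnu
    obtain ⟨m, hm, hmem⟩ := exists_max_ideal_of_mem_nonunits hnu
    have hmp : m.IsPrime := hm.isPrime
    obtain ⟨p, hpmin, hpm⟩ := Ideal.exists_minimalPrimes_le (I := (⊥ : Ideal R)) (J := m) bot_le
    have hpp : p.IsPrime := hpmin.1.1
    obtain ⟨c, h1, h2⟩ := hT m p hpm hpmin
    rw [(Ideal.algebraMap_residueField_eq_zero).2 hmem] at h1
    have : CharZero m.ResidueField :=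
      charZero_of_injective_algebraMap
        (((algebraMap R m.ResidueField).comp (algebraMap K R)).injective)
    have hc : c = 0 := by exact_mod_cast h1.symm
    rw [hc, zero_mul] at h2
    have h3 : kohLen S p = 0 := by exact_mod_cast h2
    have := koh_artinian p hpmin
    unfold kohLen at h3
    rw [ENat.toNat_eq_zero] at h3
    rcases h3 with h3 | h3
    · rw [Module.length_eq_zero_iff] at h3
      have hinj' := LocalizedModule.map_injective p.primeCompl (Algebra.linearMap R S) hinj
      have h4 : Subsingleton (LocalizedModule p.primeCompl R) := hinj'.subsingleton
      have h5 : (LocalizedModule.mk (1 : R) (1 : p.primeCompl)) = LocalizedModule.mk 0 1 :=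
        Subsingleton.elim _ _
      rw [LocalizedModule.mk_eq] at h5
      obtain ⟨u, hu⟩ := h5
      apply u.2
      have : (u : R) = 0 := by simpa [Submonoid.smul_def] using hu
      rw [this]
      exact p.zero_mem
    · exact Module.length_ne_top h3
  obtain ⟨u, hu⟩ := hunit
  refine ⟨(↑u⁻¹ : R) • (T ∘ₗ LinearMap.mul R S), ?_⟩
  have : LinearMap.mul R S 1 = LinearMap.id := by ext; simp
  simp [this, ← hu]
end
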